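/- Let k ≥ 1 be an integer and ω ∈ ℝ \ {0}. Let f : ℝ → ℂ be Bohr almost periodic such that every frequency ω′ with Fourier coefficient \hat f(ω′) ≠ 0 is a rational multiple of ω, and assume f has a weak derivative f′ with ‖f‖_{S^{1,2}} < ∞. For j ∈ ℕ set L_j := j!/|ω| and let f_j : ℝ → ℂ be the uniform limit of A_{n,L_j}[f] as n → ∞; assume each f_j has a weak derivative, and assume there exist ε > 0, B > 0 and J ∈ ℕ such that e^{L_{j+1}^{2k+ε}} ‖f_j − f‖_{S^{1,2}} ≤ B for all j ≥ J. Then the Fourier coefficients of f are absolutely summable: the family (|\hat f(ω′)|)_{ω′ ∈ ℝ} is summable, i.e. ∑'_{ω′ ∈ ℝ} |\hat f(ω′)| < ∞. -/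

import Mathlib

/-!
The frequencies of `f` are rational multiples of `ω`, so they lie in the increasing union of the
lattices `(L j)⁻¹ℤ`, `L j = j!/|ω|`. Each averaged limit `fj j` is `L j`-periodic, hence has no
frequency outside `(L j)⁻¹ℤ`; outside that lattice the coefficients of `fj j - f` are therefore
those of `-f` (`hasFourierCoeff_avg_sub`).

For a bounded `h` with weak derivative `h'`, the coefficients of `h'` are `2πiω` times those of `h`
(`HasFourierCoeff.deriv`). Bessel's inequality for the mean-value inner product (`bessel`), applied
to `h` and to `h'`, bounds `∑ (1 + ω²) |c ω|²` by twice the squared `S^{1,2}`-norm of `h`, and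
Cauchy–Schwarz on the lattice `Λ⁻¹ℤ` gives `∑ |c ω| ≤ K (1 + Λ) ‖h‖` (`sum_norm_coeff_le`).

Applied to `h = fj j - f` and the frequencies in `(L (j+1))⁻¹ℤ` but not in `(L j)⁻¹ℤ`, this bounds
their total contribution by `K (1 + L (j+1)) B exp (-L (j+1) ^ (2k+ε))`, which is summable in `j`.
The frequencies in the first lattice `(L J)⁻¹ℤ` are handled by the same bound with `h = f`.
-/

open MeasureTheory Filter Topology
open scoped ENNReal NNReal

noncomputable section

/-- `f : ℝ → ℂ` is Bohr almost periodic. -/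
def BohrAP (f : ℝ → ℂ) : Prop :=
  Continuous f ∧ ∀ ε : ℝ, 0 < ε → ∃ L : ℝ, 0 < L ∧ ∀ a : ℝ,
    ∃ τ, τ ∈ Set.Icc a (a + L) ∧ ∀ x : ℝ, ‖f (x - τ) - f x‖ < ε

/-- The Fourier coefficient of `f` at frequency `ω` equals `c`. -/
def HasFourierCoeff (f : ℝ → ℂ) (ω : ℝ) (c : ℂ) : Prop :=
  Tendsto (fun L : ℝ => (2 * (L : ℂ))⁻¹ *
      ∫ x in (-L)..L, f x * Complex.exp (((-(2 * Real.pi * ω * x) : ℝ) : ℂ) * Complex.I))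
    atTop (nhds c)

/-- `f'` is a weak derivative of `f` on `ℝ`. -/
def HasWeakDeriv (f f' : ℝ → ℂ) : Prop :=
  LocallyIntegrable f' volume ∧ ∀ x : ℝ, f x = f 0 + ∫ y in (0:ℝ)..x, f' y

/-- The `S^{1,2}(ℝ)`-norm of `f` (with weak derivative `f'`), valued in `ℝ≥0∞`. -/
def S12 (f f' : ℝ → ℂ) : ℝ≥0∞ :=
  ⨆ y : ℝ, (∫⁻ x in Set.Ioc y (y + 1),
    ((‖f x‖₊ : ℝ≥0∞) ^ 2 + (‖f' x‖₊ : ℝ≥0∞) ^ 2)) ^ (1/2 : ℝ)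

/-- The averaging operator `A_{n,L}[f]`. -/
def avgOp (f : ℝ → ℂ) (L : ℝ) (n : ℕ) (x : ℝ) : ℂ :=
  (n : ℂ)⁻¹ * ∑ m ∈ Finset.range n, f (x + m * L)

/-- `f` is limit periodic: a uniform limit of continuous periodic functions. -/
def LimitPeriodic (f : ℝ → ℂ) : Prop :=
  ∃ g : ℕ → ℝ → ℂ, (∀ j, Continuous (g j)) ∧
    (∀ j, ∃ P : ℝ, 0 < P ∧ Function.Periodic (g j) P) ∧
    TendstoUniformly g f atTop

/-! ### Characters and integration by parts -/

/-- The character `x ↦ e^{-2πiωx}` against which Fourier coefficients are computed. -/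
def ec (ω x : ℝ) : ℂ := Complex.exp (((-(2 * Real.pi * ω * x) : ℝ) : ℂ) * Complex.I)

lemma ec_continuous (ω : ℝ) : Continuous (ec ω) := by
  unfold ec; fun_prop

lemma norm_ec (ω x : ℝ) : ‖ec ω x‖ = 1 := Complex.norm_exp_ofReal_mul_I _

lemma ec_add (ω x y : ℝ) : ec ω (x + y) = ec ω x * ec ω y := by
  unfold ec; rw [← Complex.exp_add]; congr 1; push_cast; ring

lemma ec_add_left (ω ω' x : ℝ) : ec (ω + ω') x = ec ω x * ec ω' x := by
  unfold ec; rw [← Complex.exp_add]; congr 1; push_cast; ring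

lemma star_ec (ω x : ℝ) : starRingEnd ℂ (ec ω x) = ec (-ω) x := by
  unfold ec; rw [← Complex.exp_conj]; congr 1
  simp only [map_mul, Complex.conj_ofReal, Complex.conj_I]; push_cast; ring

lemma ec_eq_one {ω x : ℝ} (h : ec ω x = 1) : ∃ n : ℤ, ω * x = n := by
  obtain ⟨n, hn⟩ := Complex.exp_eq_one_iff.1 h
  refine ⟨-n, ?_⟩
  have h2 : (((-(2 * Real.pi * ω * x) : ℝ) : ℂ)) = ((n * (2 * Real.pi) : ℝ) : ℂ) := by
    apply mul_right_cancel₀ Complex.I_ne_zero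
    rw [hn]; push_cast; ring
  have h3 := Complex.ofReal_injective h2
  have : (2 * Real.pi) * (ω * x) = (2 * Real.pi) * (-n) := by linarith
  push_cast
  exact mul_left_cancel₀ (by positivity) this

lemma hasDerivAt_ec (ω x : ℝ) :
    HasDerivAt (ec ω) (-(2 * Real.pi * ω * Complex.I) * ec ω x) x := by
  have h1 : HasDerivAt (fun x : ℝ => -(2 * Real.pi * ω * x)) (-(2 * Real.pi * ω)) x := by
    simpa using ((hasDerivAt_id' x).const_mul (2 * Real.pi * ω)).fun_neg
  have h2 := (h1.ofReal_comp.mul_const Complex.I).cexp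
  refine HasDerivAt.congr_deriv (f := ec ω) h2 ?_
  unfold ec; push_cast; ring

/-- Integration by parts for a merely integrable `u` and its primitive, by Fubini on the
triangle `{y < z}`. -/
lemma ibp {u φ φ' : ℝ → ℂ} {a b : ℝ} (hab : a ≤ b) (hu : IntervalIntegrable u volume a b)
    (hφ : ∀ x, HasDerivAt φ (φ' x) x) (hφ' : Continuous φ') :
    ∫ y in a..b, u y * φ y = φ b * (∫ y in a..b, u y) - ∫ z in a..b, φ' z * ∫ y in a..z, u y := by
  have hφc : Continuous φ := continuous_iff_continuousAt.2 fun x => (hφ x).continuousAt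
  have hui : IntegrableOn u (Set.Ioc a b) volume := (intervalIntegrable_iff_integrableOn_Ioc_of_le hab).1 hu
  have hφi : IntegrableOn φ' (Set.Ioc a b) volume :=
    (intervalIntegrable_iff_integrableOn_Ioc_of_le hab).1 (hφ'.intervalIntegrable a b)
  have hint : Integrable (Function.uncurry fun y z : ℝ =>
      Set.indicator {p : ℝ × ℝ | p.1 < p.2} (fun p => u p.1 * φ' p.2) (y, z))
      ((volume.restrict (Set.Ioc a b)).prod (volume.restrict (Set.Ioc a b))) :=
    (Integrable.mul_prod hui hφi).indicator (measurableSet_lt measurable_fst measurable_snd)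
  have hsw := integral_integral_swap hint
  have hl : ∫ y in Set.Ioc a b, ∫ z in Set.Ioc a b,
      Set.indicator {p : ℝ × ℝ | p.1 < p.2} (fun p => u p.1 * φ' p.2) (y, z)
      = ∫ y in Set.Ioc a b, (φ b * u y - u y * φ y) := by
    refine setIntegral_congr_fun measurableSet_Ioc fun y hy => ?_
    have : (fun z => Set.indicator {p : ℝ × ℝ | p.1 < p.2} (fun p => u p.1 * φ' p.2) (y, z))
        = Set.indicator (Set.Ioi y) (fun z => u y * φ' z) := by
      ext z; simp [Set.indicator]
    simp only [this]
    rw [setIntegral_indicator measurableSet_Ioi,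
      show Set.Ioc a b ∩ Set.Ioi y = Set.Ioc y b by
        ext z; simp only [Set.mem_inter_iff, Set.mem_Ioc, Set.mem_Ioi]
        have := hy.1; constructor
        · rintro ⟨⟨_, h⟩, h'⟩; exact ⟨h', h⟩
        · rintro ⟨h, h'⟩; exact ⟨⟨this.trans h, h'⟩, h⟩,
      ← intervalIntegral.integral_of_le hy.2, intervalIntegral.integral_const_mul,
      intervalIntegral.integral_eq_sub_of_hasDerivAt (fun x _ => hφ x)
        (hφ'.intervalIntegrable _ _)]
    ring
  have hr : ∫ z in Set.Ioc a b, ∫ y in Set.Ioc a b,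
      Set.indicator {p : ℝ × ℝ | p.1 < p.2} (fun p => u p.1 * φ' p.2) (y, z)
      = ∫ z in Set.Ioc a b, φ' z * ∫ y in a..z, u y := by
    refine setIntegral_congr_fun measurableSet_Ioc fun z hz => ?_
    have : (fun y => Set.indicator {p : ℝ × ℝ | p.1 < p.2} (fun p => u p.1 * φ' p.2) (y, z))
        = Set.indicator (Set.Iio z) (fun y => φ' z * u y) := by
      ext y; simp [Set.indicator, mul_comm]
    simp only [this]
    rw [setIntegral_indicator measurableSet_Iio,
      show Set.Ioc a b ∩ Set.Iio z = Set.Ioo a z by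
        ext y; simp only [Set.mem_inter_iff, Set.mem_Ioc, Set.mem_Ioo, Set.mem_Iio]
        have := hz.2; constructor
        · rintro ⟨⟨h, _⟩, h'⟩; exact ⟨h, h'⟩
        · rintro ⟨h, h'⟩; exact ⟨⟨h, h'.le.trans this⟩, h'⟩,
      ← integral_Ioc_eq_integral_Ioo, ← intervalIntegral.integral_of_le hz.1.le,
      intervalIntegral.integral_const_mul]
  rw [hl, hr, ← intervalIntegral.integral_of_le hab, ← intervalIntegral.integral_of_le hab,
    intervalIntegral.integral_sub (hu.const_mul _) (hu.mul_continuousOn hφc.continuousOn),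
    intervalIntegral.integral_const_mul] at hsw
  rw [← hsw]; ring

lemma HasWeakDeriv.intervalIntegrable {h h' : ℝ → ℂ} (hh : HasWeakDeriv h h') (a b : ℝ) :
    IntervalIntegrable h' volume a b :=
  (hh.1.integrableOn_isCompact isCompact_uIcc).intervalIntegrable

lemma HasWeakDeriv.continuous {h h' : ℝ → ℂ} (hh : HasWeakDeriv h h') : Continuous h := by
  have : h = fun x => h 0 + ∫ y in (0:ℝ)..x, h' y := funext hh.2
  rw [this]
  exact continuous_const.add (intervalIntegral.continuous_primitive (hh.intervalIntegrable) 0)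

lemma HasWeakDeriv.integral_eq {h h' : ℝ → ℂ} (hh : HasWeakDeriv h h') (a b : ℝ) :
    ∫ y in a..b, h' y = h b - h a := by
  rw [hh.2 b, hh.2 a, ← intervalIntegral.integral_interval_sub_left (hh.intervalIntegrable 0 b)
    (hh.intervalIntegrable 0 a)]
  ring

lemma HasWeakDeriv.sub {g g' h h' : ℝ → ℂ} (hg : HasWeakDeriv g g') (hh : HasWeakDeriv h h') :
    HasWeakDeriv (fun x => g x - h x) (fun x => g' x - h' x) := by
  refine ⟨hg.1.sub hh.1, fun x => ?_⟩
  rw [intervalIntegral.integral_sub (hg.intervalIntegrable 0 x) (hh.intervalIntegrable 0 x),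
    hg.integral_eq, hh.integral_eq]
  ring

/-! ### Fourier coefficients: derivatives and periodic functions -/

/-- Integration by parts against a character: the boundary terms are bounded while the interval
length tends to infinity. -/
lemma HasFourierCoeff.deriv {h h' : ℝ → ℂ} (hh : HasWeakDeriv h h') {M : ℝ}
    (hM : ∀ x, ‖h x‖ ≤ M) {ω : ℝ} {c : ℂ} (hc : HasFourierCoeff h ω c) :
    HasFourierCoeff h' ω ((2 * Real.pi * ω * Complex.I) * c) := by
  have key : ∀ R : ℝ, 0 < R → (2 * (R : ℂ))⁻¹ * ∫ x in (-R)..R, h' x * ec ω x =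
      (2 * (R : ℂ))⁻¹ * (ec ω R * h R - ec ω (-R) * h (-R)) +
      (2 * Real.pi * ω * Complex.I) * ((2 * (R : ℂ))⁻¹ * ∫ x in (-R)..R, h x * ec ω x) := by
    intro R hR
    have hc := hh.continuous
    have he := ec_continuous ω
    rw [ibp (by linarith) (hh.intervalIntegrable _ _) (hasDerivAt_ec ω)
      (continuous_const.mul (ec_continuous ω))]
    simp only [hh.integral_eq]
    have e1 : ∫ z in (-R)..R, -(2 * Real.pi * ω * Complex.I) * ec ω z * (h z - h (-R)) =
        -(2 * Real.pi * ω * Complex.I) * (∫ z in (-R)..R, h z * ec ω z)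
          - h (-R) * (∫ z in (-R)..R, -(2 * Real.pi * ω * Complex.I) * ec ω z) := by
      rw [← intervalIntegral.integral_const_mul, ← intervalIntegral.integral_const_mul,
        ← intervalIntegral.integral_sub]
      · congr 1; ext z; ring
      · exact (by fun_prop : Continuous _).intervalIntegrable _ _
      · exact (by fun_prop : Continuous _).intervalIntegrable _ _
    rw [e1, intervalIntegral.integral_eq_sub_of_hasDerivAt (fun x _ => hasDerivAt_ec ω x)
      ((continuous_const.mul he).intervalIntegrable _ _)]
    ring
  have hb : Tendsto (fun R : ℝ => (2 * (R : ℂ))⁻¹ * (ec ω R * h R - ec ω (-R) * h (-R)))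
      atTop (nhds 0) := by
    have h0 : Tendsto (fun R : ℝ => M * R⁻¹) atTop (nhds 0) := by
      simpa using tendsto_inv_atTop_zero.const_mul M
    refine squeeze_zero_norm' ?_ h0
    filter_upwards [eventually_gt_atTop 0] with R hR
    have h1 : ‖ec ω R * h R - ec ω (-R) * h (-R)‖ ≤ M + M := by
      refine (norm_sub_le _ _).trans ?_
      rw [norm_mul, norm_mul, norm_ec, norm_ec, one_mul, one_mul]
      exact add_le_add (hM _) (hM _)
    rw [norm_mul, norm_inv, norm_mul, Complex.norm_real, Real.norm_of_nonneg hR.le, mul_inv]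
    have : 0 ≤ R⁻¹ := by positivity
    norm_num
    nlinarith
  have := hb.add (hc.const_mul (2 * Real.pi * ω * Complex.I))
  rw [zero_add] at this
  refine this.congr' ?_
  filter_upwards [eventually_gt_atTop 0] with R hR
  exact (key R hR).symm

/-- A bounded continuous `P`-periodic function has zero Fourier coefficient at every frequency
whose character is not `P`-periodic: translating the mean by `P` multiplies it by a number
different from `1` while changing it only by boundary terms. -/
lemma hasFourierCoeff_zero_of_periodic {g : ℝ → ℂ} (hg : Continuous g) {M : ℝ}
    (hM : ∀ x, ‖g x‖ ≤ M) {P ω : ℝ} (hP : ∀ x, g (x + P) = g x) (hω : ec ω P ≠ 1) :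
    HasFourierCoeff g ω 0 := by
  have he := ec_continuous ω
  have hi : ∀ a b, IntervalIntegrable (fun x => g x * ec ω x) volume a b := fun a b =>
    (by fun_prop : Continuous _).intervalIntegrable _ _
  have hd : 0 < ‖ec ω P - 1‖ := norm_pos_iff.2 (sub_ne_zero.2 hω)
  have key : ∀ R : ℝ, ‖∫ x in (-R)..R, g x * ec ω x‖ * ‖ec ω P - 1‖ ≤ 2 * M * |P| := by
    intro R
    have e1 : ec ω P * (∫ x in (-R)..R, g x * ec ω x) =
        ∫ x in (-R + P)..(R + P), g x * ec ω x := by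
      rw [← intervalIntegral.integral_comp_add_right, ← intervalIntegral.integral_const_mul]
      congr 1; ext x; rw [hP, ec_add]; ring
    have e2 : (∫ x in (-R)..R, g x * ec ω x) * (ec ω P - 1) =
        (∫ x in R..(R + P), g x * ec ω x) - ∫ x in (-R)..(-R + P), g x * ec ω x := by
      rw [mul_sub, mul_comm, e1, mul_one,
        ← intervalIntegral.integral_interval_sub_left (hi 0 (R+P)) (hi 0 (-R+P)),
        ← intervalIntegral.integral_interval_sub_left (hi 0 (R+P)) (hi 0 (R)),
        ← intervalIntegral.integral_interval_sub_left (hi 0 (-R+P)) (hi 0 (-R)),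
        ← intervalIntegral.integral_interval_sub_left (hi 0 (R)) (hi 0 (-R))]
      ring
    have e3 : ∀ a, ‖∫ x in a..(a + P), g x * ec ω x‖ ≤ M * |P| := by
      intro a
      have := intervalIntegral.norm_integral_le_of_norm_le_const (a := a) (b := a + P) (C := M)
        (f := fun x => g x * ec ω x) (fun x _ => by rw [norm_mul, norm_ec, mul_one]; exact hM x)
      simpa using this
    rw [← norm_mul, e2]
    refine (norm_sub_le _ _).trans ?_
    linarith [e3 R, e3 (-R)]
  have h0 : Tendsto (fun R : ℝ => (2 * M * |P| / ‖ec ω P - 1‖ / 2) * R⁻¹) atTop (nhds 0) := by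
    simpa using tendsto_inv_atTop_zero.const_mul (2 * M * |P| / ‖ec ω P - 1‖ / 2)
  refine squeeze_zero_norm' ?_ h0
  filter_upwards [eventually_gt_atTop 0] with R hR
  have h1 := (le_div_iff₀ hd).2 (key R)
  change ‖(2 * (R : ℂ))⁻¹ * ∫ x in (-R)..R, g x * ec ω x‖ ≤ _
  rw [norm_mul, norm_inv, norm_mul, Complex.norm_real, Real.norm_of_nonneg hR.le, mul_inv]
  have h2 : 0 ≤ R⁻¹ := by positivity
  have h3 := mul_le_mul_of_nonneg_left h1 h2
  rw [Complex.norm_ofNat]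
  linarith

lemma hasFourierCoeff_one (ω : ℝ) :
    HasFourierCoeff (fun _ => 1) ω (if ω = 0 then 1 else 0) := by
  split_ifs with h
  · subst h
    refine tendsto_const_nhds.congr' ?_
    filter_upwards [eventually_gt_atTop 0] with R hR
    have : (R : ℂ) ≠ 0 := by exact_mod_cast hR.ne'
    simp
    field_simp
    norm_num
  · refine hasFourierCoeff_zero_of_periodic (M := 1) (P := 1 / (2 * ω)) continuous_const
      (by simp) (fun _ => rfl) fun h1 => ?_
    obtain ⟨n, hn⟩ := ec_eq_one h1
    have h2 : (1 : ℝ) = 2 * n := by rw [← hn]; field_simp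
    have : (1 : ℤ) = 2 * n := by exact_mod_cast h2
    omega

lemma hasFourierCoeff_ec (ω ω' : ℝ) :
    HasFourierCoeff (ec (-ω')) ω (if ω = ω' then 1 else 0) := by
  have := hasFourierCoeff_one (ω + -ω')
  simp only [← sub_eq_add_neg, sub_eq_zero] at this
  refine this.congr fun R => ?_
  congr 1
  refine intervalIntegral.integral_congr fun x _ => ?_
  change 1 * ec (ω - ω') x = ec (-ω') x * ec ω x
  rw [sub_eq_add_neg, ec_add_left]; ring

lemma HasFourierCoeff.sub {g h : ℝ → ℂ} (hg : Continuous g) (hh : Continuous h) {ω : ℝ} {c d : ℂ}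
    (hc : HasFourierCoeff g ω c) (hd : HasFourierCoeff h ω d) :
    HasFourierCoeff (fun x => g x - h x) ω (c - d) := by
  refine (Tendsto.sub hc hd).congr fun R => ?_
  have he := ec_continuous ω
  change (2 * (R : ℂ))⁻¹ * (∫ x in (-R)..R, g x * ec ω x) -
    (2 * (R : ℂ))⁻¹ * (∫ x in (-R)..R, h x * ec ω x) =
    (2 * (R : ℂ))⁻¹ * ∫ x in (-R)..R, (g x - h x) * ec ω x
  rw [← mul_sub, ← intervalIntegral.integral_sub]
  · congr 2; ext x; ring
  · exact (by fun_prop : Continuous _).intervalIntegrable _ _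
  · exact (by fun_prop : Continuous _).intervalIntegrable _ _

/-! ### Bessel's inequality -/

/-- The trigonometric polynomial `∑_{ω ∈ F} c ω e^{2πiωx}`. -/
def trigPoly (F : Finset ℝ) (c : ℝ → ℂ) (x : ℝ) : ℂ := ∑ ω ∈ F, c ω * ec (-ω) x

lemma trigPoly_continuous (F : Finset ℝ) (c : ℝ → ℂ) : Continuous (trigPoly F c) :=
  continuous_finsetSum _ fun _ _ => continuous_const.mul (ec_continuous _)

/-- The mean inner product of `v` with the trigonometric polynomial built from its own
coefficients; used with `v = u` and with `v` the polynomial itself. -/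
lemma tendsto_mean_mul_conj_trigPoly {v : ℝ → ℂ}
    (hv : ∀ a b, IntervalIntegrable v volume a b) (F : Finset ℝ) {c : ℝ → ℂ}
    (hc : ∀ ω ∈ F, HasFourierCoeff v ω (c ω)) :
    Tendsto (fun R : ℝ => (2 * (R : ℂ))⁻¹ *
      ∫ x in (-R)..R, v x * starRingEnd ℂ (trigPoly F c x)) atTop
      (nhds ((∑ ω ∈ F, ‖c ω‖ ^ 2 : ℝ) : ℂ)) := by
  have h1 : Tendsto (fun R : ℝ => ∑ ω ∈ F, starRingEnd ℂ (c ω) * ((2 * (R : ℂ))⁻¹ *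
      ∫ x in (-R)..R, v x * ec ω x)) atTop (nhds (∑ ω ∈ F, starRingEnd ℂ (c ω) * c ω)) :=
    tendsto_finsetSum _ fun ω hω => (hc ω hω).const_mul _
  have h2 : ∑ ω ∈ F, starRingEnd ℂ (c ω) * c ω = ((∑ ω ∈ F, ‖c ω‖ ^ 2 : ℝ) : ℂ) := by
    push_cast
    exact Finset.sum_congr rfl fun ω _ => Complex.conj_mul' _
  rw [h2] at h1
  refine h1.congr fun R => ?_
  have h3 : ∀ x, v x * starRingEnd ℂ (trigPoly F c x) =
      ∑ ω ∈ F, starRingEnd ℂ (c ω) * (v x * ec ω x) := by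
    intro x
    simp only [trigPoly, map_sum, map_mul, star_ec, neg_neg, Finset.mul_sum]
    exact Finset.sum_congr rfl fun ω _ => by ring
  simp only [h3]
  rw [intervalIntegral.integral_finsetSum, Finset.mul_sum]
  · refine Finset.sum_congr rfl fun ω _ => ?_
    rw [intervalIntegral.integral_const_mul]; ring
  · exact fun ω _ => ((hv _ _).mul_continuousOn (ec_continuous ω).continuousOn).const_mul _

lemma hasFourierCoeff_trigPoly (F : Finset ℝ) (c : ℝ → ℂ) {ω : ℝ} (hω : ω ∈ F) :
    HasFourierCoeff (trigPoly F c) ω (c ω) := by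
  have h1 : Tendsto (fun R : ℝ => ∑ ω' ∈ F, c ω' * ((2 * (R : ℂ))⁻¹ *
      ∫ x in (-R)..R, ec (-ω') x * ec ω x)) atTop
      (nhds (∑ ω' ∈ F, c ω' * (if ω = ω' then 1 else 0))) :=
    tendsto_finsetSum _ fun ω' _ => (hasFourierCoeff_ec ω ω').const_mul _
  simp only [mul_ite, mul_one, mul_zero, Finset.sum_ite_eq, hω, if_true] at h1
  refine h1.congr fun R => ?_
  change _ = (2 * (R : ℂ))⁻¹ * ∫ x in (-R)..R, trigPoly F c x * ec ω x
  simp only [trigPoly, Finset.sum_mul]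
  rw [intervalIntegral.integral_finsetSum, Finset.mul_sum]
  · refine Finset.sum_congr rfl fun ω' _ => ?_
    simp only [mul_assoc]
    rw [intervalIntegral.integral_const_mul]; ring
  · intro ω' _
    have he := ec_continuous ω
    have he' := ec_continuous (-ω')
    exact (by fun_prop : Continuous _).intervalIntegrable _ _

lemma lintegral_Ioc_nat_le {F : ℝ → ℝ≥0∞} {M : ℝ≥0∞}
    (hM : ∀ y : ℝ, ∫⁻ x in Set.Ioc y (y + 1), F x ≤ M) (a : ℝ) (n : ℕ) :
    ∫⁻ x in Set.Ioc a (a + n), F x ≤ n * M := by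
  induction n with
  | zero => simp
  | succ n ih =>
    have : Set.Ioc a (a + (n + 1 : ℕ)) = Set.Ioc a (a + n) ∪ Set.Ioc (a + n) (a + n + 1) := by
      rw [Set.Ioc_union_Ioc_eq_Ioc (by simp) (by linarith)]; push_cast; ring_nf
    rw [this]
    refine (lintegral_union_le _ _ _).trans ?_
    push_cast
    rw [add_mul, one_mul]
    exact add_le_add ih (hM _)

/-- Bessel's inequality for the mean-value inner product: the norm of `u` enters only through
the local bound `∫_y^{y+1} |u|² ≤ M`, and only finitely many coefficients are assumed to exist. -/
lemma bessel {u : ℝ → ℂ} (hu : AEStronglyMeasurable u volume) {M : ℝ} (hM0 : 0 ≤ M)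
    (hM : ∀ y : ℝ, ∫⁻ x in Set.Ioc y (y + 1), (‖u x‖₊ : ℝ≥0∞) ^ 2 ≤ ENNReal.ofReal M)
    (F : Finset ℝ) {c : ℝ → ℂ} (hc : ∀ ω ∈ F, HasFourierCoeff u ω (c ω)) :
    ∑ ω ∈ F, ‖c ω‖ ^ 2 ≤ M := by
  set p := trigPoly F c with hp
  have hpc : Continuous p := trigPoly_continuous F c
  have hlin : ∀ N : ℕ, ∫⁻ x in Set.Ioc (-(N:ℝ)) N, (‖u x‖₊ : ℝ≥0∞) ^ 2 ≤
      ENNReal.ofReal (2 * N * M) := by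
    intro N
    have h := lintegral_Ioc_nat_le hM (-(N:ℝ)) (2 * N)
    have e : -(N:ℝ) + ((2 * N : ℕ) : ℝ) = N := by push_cast; ring
    rw [e] at h
    refine h.trans (le_of_eq ?_)
    rw [ENNReal.ofReal_mul (by positivity), ← ENNReal.ofReal_natCast]
    push_cast; rfl
  have hsq : ∀ N : ℕ, IntegrableOn (fun x => ‖u x‖ ^ 2) (Set.Ioc (-(N:ℝ)) N) volume := by
    intro N
    refine ⟨(hu.restrict.norm.pow 2), ?_⟩
    refine lt_of_le_of_lt (le_of_eq ?_) ((hlin N).trans_lt ENNReal.ofReal_lt_top)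
    refine lintegral_congr fun x => ?_
    rw [enorm_pow, enorm_norm]; rfl
  have hsqle : ∀ N : ℕ, ∫ x in Set.Ioc (-(N:ℝ)) N, ‖u x‖ ^ 2 ≤ 2 * N * M := by
    intro N
    rw [integral_eq_lintegral_of_nonneg_ae (Eventually.of_forall fun x => by positivity)
      (hsq N).aestronglyMeasurable]
    refine ENNReal.toReal_le_of_le_ofReal (by positivity) ((le_of_eq ?_).trans (hlin N))
    refine lintegral_congr fun x => ?_
    rw [ENNReal.ofReal_pow (norm_nonneg _), ofReal_norm]; rfl
  have huN : ∀ N : ℕ, IntegrableOn u (Set.Ioc (-(N:ℝ)) N) volume := by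
    intro N
    have : MemLp u 2 (volume.restrict (Set.Ioc (-(N:ℝ)) N)) :=
      (memLp_two_iff_integrable_sq_norm hu.restrict).2 (hsq N)
    exact this.integrable (by norm_num)
  have hui : ∀ a b, IntervalIntegrable u volume a b := by
    intro a b
    obtain ⟨N, hN⟩ := exists_nat_gt (max |a| |b|)
    rw [intervalIntegrable_iff]
    refine (huN N).mono_set fun x hx => ?_
    have ha := abs_lt.1 ((le_max_left _ _).trans_lt hN)
    have hb := abs_lt.1 ((le_max_right _ _).trans_lt hN)
    rw [Set.mem_uIoc] at hx
    constructor <;> rcases hx with h | h <;> linarith [h.1, h.2, ha.1, ha.2, hb.1, hb.2]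
  -- `0 ≤ ‖u - p‖²` integrated over `(-N, N]` reads `2 Re ⟨u, p⟩ - ⟨p, p⟩ ≤ ⟨u, u⟩`; as `N → ∞`
  -- both inner products on the left tend to `∑ ‖c ω‖²`.
  have t1 := (Complex.continuous_re.tendsto _).comp
    ((tendsto_mean_mul_conj_trigPoly hui F hc).comp tendsto_natCast_atTop_atTop)
  have t2 := (Complex.continuous_re.tendsto _).comp
    ((tendsto_mean_mul_conj_trigPoly (fun a b => hpc.intervalIntegrable a b) F
      (fun ω hω => hasFourierCoeff_trigPoly F c hω)).comp
      (tendsto_natCast_atTop_atTop (R := ℝ)))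
  have t3 := (t1.const_mul 2).sub t2
  have hfin : 2 * (((∑ ω ∈ F, ‖c ω‖ ^ 2 : ℝ) : ℂ)).re - (((∑ ω ∈ F, ‖c ω‖ ^ 2 : ℝ) : ℂ)).re ≤ M := by
    refine le_of_tendsto t3 ?_
    filter_upwards [eventually_gt_atTop 0] with N hN
    have hN' : (0:ℝ) < N := by exact_mod_cast hN
    have hNN : -(N:ℝ) ≤ N := by linarith
    have hre : ∀ z : ℂ, ((2 * (((N:ℕ):ℝ) : ℂ))⁻¹ * z).re = (2 * (N:ℝ))⁻¹ * z.re := by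
      intro z
      rw [show (2 * (((N:ℕ):ℝ) : ℂ))⁻¹ = (((2 * (N:ℝ))⁻¹ : ℝ) : ℂ) by push_cast; rfl,
        Complex.re_ofReal_mul]
    simp only [Function.comp_apply, hre]
    rw [intervalIntegral.integral_of_le hNN, intervalIntegral.integral_of_le hNN]
    have i1 : IntegrableOn (fun x => u x * starRingEnd ℂ (p x)) (Set.Ioc (-(N:ℝ)) N) volume :=
      (intervalIntegrable_iff_integrableOn_Ioc_of_le hNN).1
        ((hui _ _).mul_continuousOn (Complex.continuous_conj.comp hpc).continuousOn)
    have i2 : IntegrableOn (fun x => p x * starRingEnd ℂ (p x)) (Set.Ioc (-(N:ℝ)) N) volume :=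
      (intervalIntegrable_iff_integrableOn_Ioc_of_le hNN).1
        ((hpc.mul (Complex.continuous_conj.comp hpc)).intervalIntegrable _ _)
    have r1 := integral_re i1
    have r2 := integral_re i2
    simp only [RCLike.re_eq_complex_re] at r1 r2
    rw [← r1, ← r2]
    have hle : 2 * (∫ x in Set.Ioc (-(N:ℝ)) N, (u x * starRingEnd ℂ (p x)).re) -
        (∫ x in Set.Ioc (-(N:ℝ)) N, (p x * starRingEnd ℂ (p x)).re) ≤
        ∫ x in Set.Ioc (-(N:ℝ)) N, ‖u x‖ ^ 2 := by
      have j1 : IntegrableOn (fun x => (u x * starRingEnd ℂ (p x)).re)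
        (Set.Ioc (-(N:ℝ)) N) volume := i1.re
      have j2 : IntegrableOn (fun x => (p x * starRingEnd ℂ (p x)).re)
        (Set.Ioc (-(N:ℝ)) N) volume := i2.re
      rw [← integral_const_mul, ← integral_sub (j1.const_mul 2) j2]
      refine integral_mono ((j1.const_mul 2).sub j2) (hsq N) fun x => ?_
      have : 0 ≤ ‖u x - p x‖ ^ 2 := by positivity
      simp only [← Complex.normSq_eq_norm_sq, Complex.normSq_apply, Complex.sub_re,
        Complex.sub_im, Complex.mul_re, Complex.conj_re, Complex.conj_im] at this ⊢
      nlinarith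
    have h5 := hle.trans (hsqle N)
    have h6 := mul_le_mul_of_nonneg_left h5 (show 0 ≤ (2 * (N:ℝ))⁻¹ by positivity)
    calc _ = (2 * (N:ℝ))⁻¹ * (2 * (∫ x in Set.Ioc (-(N:ℝ)) N, (u x * starRingEnd ℂ (p x)).re) -
        (∫ x in Set.Ioc (-(N:ℝ)) N, (p x * starRingEnd ℂ (p x)).re)) := by ring
      _ ≤ _ := h6
      _ = M := by field_simp
  rw [Complex.ofReal_re] at hfin
  linarith

/-! ### The absolute bound on a lattice of frequencies -/

lemma summable_one_div_one_add_int_sq : Summable (fun n : ℤ => 1 / (1 + (n : ℝ) ^ 2)) := by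
  have h1 : Summable (fun n : ℤ => 1 / (n : ℝ) ^ 2) :=
    Real.summable_one_div_int_pow.2 (by norm_num)
  have h2 : Summable (fun n : ℤ => if n = 0 then (1 : ℝ) else 0) := (hasSum_ite_eq 0 1).summable
  refine Summable.of_nonneg_of_le (fun n => by positivity) (fun n => ?_) (h1.add h2)
  by_cases hn : n = 0
  · simp [hn]
  · have : (n : ℝ) ≠ 0 := by exact_mod_cast hn
    have : 0 < (n : ℝ) ^ 2 := by positivity
    simp only [hn, if_false, add_zero]
    exact one_div_le_one_div_of_le this (by linarith)

lemma sum_one_div_one_add_sq_le {F : Finset ℝ} {Λ : ℝ} (hΛ : 0 < Λ)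
    (hF : ∀ ω ∈ F, ∃ n : ℤ, ω * Λ = n) :
    ∑ ω ∈ F, 1 / (1 + ω ^ 2) ≤ (1 + Λ ^ 2) * ∑' n : ℤ, 1 / (1 + (n : ℝ) ^ 2) := by
  have hfl : ∀ ω ∈ F, ((⌊ω * Λ⌋ : ℤ) : ℝ) = ω * Λ := by
    intro ω hω
    obtain ⟨n, hn⟩ := hF ω hω
    rw [hn, Int.floor_intCast]
  have hinj : Set.InjOn (fun ω : ℝ => ⌊ω * Λ⌋) F := by
    intro x hx y hy hxy
    have : x * Λ = y * Λ := by
      rw [← hfl x hx, ← hfl y hy]; exact congrArg _ hxy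
    exact mul_right_cancel₀ hΛ.ne' this
  calc ∑ ω ∈ F, 1 / (1 + ω ^ 2)
      ≤ ∑ ω ∈ F, (1 + Λ ^ 2) * (1 / (1 + ((⌊ω * Λ⌋ : ℤ) : ℝ) ^ 2)) := by
        refine Finset.sum_le_sum fun ω hω => ?_
        rw [hfl ω hω, mul_one_div, div_le_div_iff₀ (by positivity) (by positivity)]
        nlinarith [sq_nonneg Λ, sq_nonneg ω]
    _ = (1 + Λ ^ 2) * ∑ n ∈ F.image (fun ω : ℝ => ⌊ω * Λ⌋), 1 / (1 + (n : ℝ) ^ 2) := by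
        rw [Finset.sum_image hinj, Finset.mul_sum]
    _ ≤ _ := by
        refine mul_le_mul_of_nonneg_left ?_ (by positivity)
        exact summable_one_div_one_add_int_sq.sum_le_tsum _ (fun n _ => by positivity)

lemma lintegral_le_of_S12_le {h h' : ℝ → ℂ} {C : ℝ} (hC : 0 ≤ C)
    (hS : S12 h h' ≤ ENNReal.ofReal C) (y : ℝ) :
    ∫⁻ x in Set.Ioc y (y + 1), ((‖h x‖₊ : ℝ≥0∞) ^ 2 + (‖h' x‖₊ : ℝ≥0∞) ^ 2)
      ≤ ENNReal.ofReal (C ^ 2) := by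
  have h1 := (le_iSup (fun y : ℝ => (∫⁻ x in Set.Ioc y (y + 1),
    ((‖h x‖₊ : ℝ≥0∞) ^ 2 + (‖h' x‖₊ : ℝ≥0∞) ^ 2)) ^ (1/2 : ℝ)) y).trans hS
  have h2 := ENNReal.rpow_le_rpow h1 (show (0:ℝ) ≤ 2 by norm_num)
  rw [← ENNReal.rpow_mul] at h2
  norm_num at h2
  rwa [ENNReal.ofReal_pow hC]

/-- The constant in the `ℓ¹` bound for Fourier coefficients on a lattice. -/
def latticeConst : ℝ := √(2 * ∑' n : ℤ, 1 / (1 + (n : ℝ) ^ 2))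

/-- The `ℓ¹` bound on the lattice `Λ⁻¹ℤ`: Bessel for `h` and for `h'` bounds
`∑ (1 + ω²) |c ω|²`, and Cauchy–Schwarz costs a factor of order `1 + Λ`. -/
lemma sum_norm_coeff_le {h h' : ℝ → ℂ} (hh : HasWeakDeriv h h') {M : ℝ} (hM : ∀ x, ‖h x‖ ≤ M)
    {C : ℝ} (hC : 0 ≤ C) (hS : S12 h h' ≤ ENNReal.ofReal C) {Λ : ℝ} (hΛ : 0 < Λ)
    {F : Finset ℝ} (hF : ∀ ω ∈ F, ∃ n : ℤ, ω * Λ = n) {c : ℝ → ℂ}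
    (hc : ∀ ω ∈ F, HasFourierCoeff h ω (c ω)) :
    ∑ ω ∈ F, ‖c ω‖ ≤ (1 + Λ) * latticeConst * C := by
  set D := ∑' n : ℤ, 1 / (1 + (n : ℝ) ^ 2) with hD
  have hD0 : 0 ≤ D := tsum_nonneg fun n => by positivity
  have b1 : ∑ ω ∈ F, ‖c ω‖ ^ 2 ≤ C ^ 2 :=
    bessel hh.continuous.aestronglyMeasurable (by positivity)
      (fun y => (lintegral_mono fun x => le_self_add).trans (lintegral_le_of_S12_le hC hS y)) F hc
  have b2 : ∑ ω ∈ F, ‖(2 * Real.pi * ω * Complex.I) * c ω‖ ^ 2 ≤ C ^ 2 :=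
    bessel (c := fun ω => (2 * Real.pi * ω * Complex.I) * c ω)
      hh.1.aestronglyMeasurable (by positivity)
      (fun y => (lintegral_mono fun x => le_add_self).trans (lintegral_le_of_S12_le hC hS y)) F
      fun ω hω => (hc ω hω).deriv hh hM
  have b3 : ∑ ω ∈ F, ‖c ω‖ ^ 2 * (1 + ω ^ 2) ≤ 2 * C ^ 2 := by
    have : ∑ ω ∈ F, ω ^ 2 * ‖c ω‖ ^ 2 ≤ C ^ 2 := by
      refine (Finset.sum_le_sum fun ω _ => ?_).trans b2
      rw [norm_mul, norm_mul, norm_mul, norm_mul, Complex.norm_I, Complex.norm_real,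
        Complex.norm_real, Complex.norm_ofNat, mul_pow, Real.norm_of_nonneg Real.pi_pos.le,
        mul_one, mul_pow, Real.norm_eq_abs, sq_abs]
      refine mul_le_mul_of_nonneg_right ?_ (by positivity)
      have : 1 ≤ (2 * Real.pi) ^ 2 := by nlinarith [Real.pi_gt_three]
      nlinarith [sq_nonneg ω]
    calc _ = ∑ ω ∈ F, (‖c ω‖ ^ 2 + ω ^ 2 * ‖c ω‖ ^ 2) :=
          Finset.sum_congr rfl fun ω _ => by ring
      _ ≤ _ := by rw [Finset.sum_add_distrib]; linarith
  have b4 := sum_one_div_one_add_sq_le hΛ hF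
  have cs : (∑ ω ∈ F, ‖c ω‖) ^ 2 ≤
      (∑ ω ∈ F, ‖c ω‖ ^ 2 * (1 + ω ^ 2)) * ∑ ω ∈ F, 1 / (1 + ω ^ 2) := by
    refine Finset.sum_sq_le_sum_mul_sum_of_sq_le_mul _ (fun ω _ => by positivity)
      (fun ω _ => by positivity) fun ω _ => ?_
    have : 1 + ω ^ 2 ≠ 0 := by positivity
    exact le_of_eq (by field_simp)
  have hK : latticeConst ^ 2 = 2 * D := Real.sq_sqrt (by positivity)
  have hK0 : 0 ≤ latticeConst := Real.sqrt_nonneg _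
  refine (pow_le_pow_iff_left₀ (Finset.sum_nonneg fun _ _ => norm_nonneg _)
    (by positivity) two_ne_zero).1 ?_
  calc _ ≤ _ := cs
    _ ≤ (2 * C ^ 2) * ((1 + Λ ^ 2) * D) :=
        mul_le_mul b3 b4 (Finset.sum_nonneg fun ω _ => by positivity) (by positivity)
    _ = (1 + Λ ^ 2) * (2 * D * C ^ 2) := by ring
    _ ≤ (1 + Λ) ^ 2 * (2 * D * C ^ 2) :=
        mul_le_mul_of_nonneg_right (by nlinarith) (by positivity)
    _ = _ := by rw [mul_pow, mul_pow, hK]; ring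

/-! ### Averages and their limits -/

lemma BohrAP.bounded {f : ℝ → ℂ} (hf : BohrAP f) : ∃ M, ∀ x, ‖f x‖ ≤ M := by
  obtain ⟨L, hL, h⟩ := hf.2 1 one_pos
  obtain ⟨M, hM⟩ := (isCompact_Icc (a := -L) (b := 0)).exists_bound_of_continuousOn
    hf.1.continuousOn
  refine ⟨M + 1, fun x => ?_⟩
  obtain ⟨τ, hτ, hx⟩ := h x
  have h1 := hM (x - τ) ⟨by linarith [hτ.2], by linarith [hτ.1]⟩
  have h2 := norm_sub_norm_le (f x) (f (x - τ))
  rw [norm_sub_rev] at h2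
  linarith [hx x]

lemma norm_avgOp_le {f : ℝ → ℂ} {M : ℝ} (hM : ∀ x, ‖f x‖ ≤ M) (L : ℝ) (n : ℕ) (x : ℝ) :
    ‖avgOp f L n x‖ ≤ M := by
  have hM0 : 0 ≤ M := (norm_nonneg _).trans (hM 0)
  rcases Nat.eq_zero_or_pos n with rfl | hn
  · simpa [avgOp] using hM0
  · have hn' : (0:ℝ) < n := by exact_mod_cast hn
    rw [avgOp, norm_mul, norm_inv, Complex.norm_natCast, inv_mul_le_iff₀ hn']
    refine (norm_sum_le_of_le _ fun m _ => hM _).trans ?_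
    simp

/-- Translating `avgOp f L n` by `L` telescopes to `n⁻¹ (f (x + nL) - f x)`, which tends to `0`. -/
lemma avgOp_lim_periodic {f g : ℝ → ℂ} {M L : ℝ} (hM : ∀ x, ‖f x‖ ≤ M)
    (h : ∀ x, Tendsto (fun n => avgOp f L n x) atTop (nhds (g x))) (x : ℝ) :
    g (x + L) = g x := by
  have h1 := (h (x + L)).sub (h x)
  have h2 : Tendsto (fun n : ℕ => avgOp f L n (x + L) - avgOp f L n x) atTop (nhds 0) := by
    have h0 : Tendsto (fun n : ℕ => (2 * M) * (n : ℝ)⁻¹) atTop (nhds 0) := by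
      simpa using (tendsto_inv_atTop_zero.comp
        (tendsto_natCast_atTop_atTop (R := ℝ))).const_mul (2 * M)
    refine squeeze_zero_norm (fun n => ?_) h0
    have e : avgOp f L n (x + L) - avgOp f L n x = (n : ℂ)⁻¹ * (f (x + n * L) - f x) := by
      have := Finset.sum_range_sub (fun m : ℕ => f (x + m * L)) n
      simp only [Nat.cast_zero, zero_mul, add_zero] at this
      rw [avgOp, avgOp, ← mul_sub, ← this, ← Finset.sum_sub_distrib]
      congr 1
      refine Finset.sum_congr rfl fun m _ => ?_
      push_cast
      ring_nf
    rw [e, norm_mul, norm_inv, Complex.norm_natCast, mul_comm]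
    refine mul_le_mul_of_nonneg_right ((norm_sub_le _ _).trans ?_) (by positivity)
    linarith [hM (x + n * L), hM x]
  exact sub_eq_zero.1 (tendsto_nhds_unique h1 h2)

/-- Off the lattice `L⁻¹ℤ` the coefficients of `g - f` are those of `-f`, because the averaged
limit `g` is `L`-periodic and has no such frequencies. -/
lemma hasFourierCoeff_avg_sub {f g : ℝ → ℂ} (hf : Continuous f) (hg : Continuous g) {M L : ℝ}
    (hM : ∀ x, ‖f x‖ ≤ M) (h : ∀ x, Tendsto (fun n => avgOp f L n x) atTop (nhds (g x)))
    {ω : ℝ} {c : ℂ} (hc : HasFourierCoeff f ω c) (hω : ¬ ∃ n : ℤ, ω * L = n) :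
    HasFourierCoeff (fun x => g x - f x) ω (-c) := by
  have hgM : ∀ x, ‖g x‖ ≤ M := fun x =>
    le_of_tendsto (h x).norm (Eventually.of_forall fun n => norm_avgOp_le hM L n x)
  have := (hasFourierCoeff_zero_of_periodic hg hgM (avgOp_lim_periodic hM h)
    (fun h1 => hω (ec_eq_one h1))).sub hg hf hc
  rwa [zero_sub] at this

/-- The assumed decay beats the factor `1 + L` of the lattice bound by a full power of `L`, which
suffices because `L j` grows factorially. -/
lemma one_add_div_exp_le {L a : ℝ} (hL : 1 ≤ L) (ha : 1 ≤ a) :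
    (1 + L) / Real.exp (L ^ a) ≤ 4 * L⁻¹ := by
  have h1 : L ≤ L ^ a := by simpa using Real.rpow_le_rpow_of_exponent_le hL ha
  have h2 : L ^ 2 / 2 ≤ Real.exp (L ^ a) := by
    have := Real.quadratic_le_exp_of_nonneg (show 0 ≤ L by linarith)
    have := Real.exp_le_exp.2 h1
    linarith
  rw [← div_eq_mul_inv, div_le_div_iff₀ (Real.exp_pos _) (by linarith)]
  nlinarith

/-! ### Summation over the chain of lattices -/

/-- under the hypotheses of the main theorem, the Fourier coefficients of
the initial condition are absolutely summable. -/
theorem fourier_coeff_abs_summable (k : ℕ) (hk : 1 ≤ k) (ω : ℝ) (hω : ω ≠ 0)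
    (f f' : ℝ → ℂ) (hf : BohrAP f) (Fhat : ℝ → ℂ)
    (hFhat : ∀ ω' : ℝ, HasFourierCoeff f ω' (Fhat ω'))
    (hfreq : ∀ ω' : ℝ, Fhat ω' ≠ 0 → ∃ q : ℚ, ω' = (q : ℝ) * ω)
    (hwd : HasWeakDeriv f f') (hfin : S12 f f' ≠ ⊤)
    (L : ℕ → ℝ) (hL : ∀ j : ℕ, L j = (Nat.factorial j : ℝ) / |ω|)
    (fj fj' : ℕ → ℝ → ℂ)
    (hfj : ∀ j : ℕ, TendstoUniformly (fun n x => avgOp f (L j) n x) (fj j) atTop)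
    (hwdj : ∀ j : ℕ, HasWeakDeriv (fj j) (fj' j))
    (ε B : ℝ) (hε : 0 < ε) (hB : 0 < B) (J : ℕ)
    (hrate : ∀ j ≥ J,
      ENNReal.ofReal (Real.exp (L (j+1) ^ ((2 * k : ℝ) + ε))) *
        S12 (fun x => fj j x - f x) (fun x => fj' j x - f' x) ≤ ENNReal.ofReal B) :
    Summable (fun ω' : ℝ => ‖Fhat ω'‖) := by
  have hω' : 0 < |ω| := abs_pos.2 hω
  have hL0 : ∀ j, 0 < L j := fun j => by
    rw [hL]; exact div_pos (by exact_mod_cast Nat.factorial_pos j) hω'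
  obtain ⟨M, hM⟩ := hf.bounded
  have hpt : ∀ j x, Tendsto (fun n => avgOp f (L j) n x) atTop (nhds (fj j x)) :=
    fun j x => (hfj j).tendsto_at x
  have hfjM : ∀ j x, ‖fj j x‖ ≤ M := fun j x =>
    le_of_tendsto (hpt j x).norm (Eventually.of_forall fun n => norm_avgOp_le hM (L j) n x)
  have hstep : ∀ j (w : ℝ), (∃ n : ℤ, w * L j = n) → ∃ n : ℤ, w * L (j + 1) = n := by
    rintro j w ⟨n, hn⟩
    refine ⟨(j + 1) * n, ?_⟩
    push_cast
    rw [← hn, hL, hL, Nat.factorial_succ]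
    push_cast
    ring
  have hmono : ∀ i j, i ≤ j → ∀ w : ℝ, (∃ n : ℤ, w * L i = n) → ∃ n : ℤ, w * L j = n := by
    intro i j hij w hw
    induction j, hij using Nat.le_induction with
    | base => exact hw
    | succ j _ ih => exact hstep j w ih
  -- every rational multiple of `ω` lies in the lattice of some `L j`: clear its denominator
  have hex : ∀ w : ℝ, Fhat w ≠ 0 → ∃ j, ∃ n : ℤ, w * L j = n := by
    intro w hw
    obtain ⟨q, rfl⟩ := hfreq w hw
    obtain ⟨m, hm⟩ := Nat.dvd_factorial q.pos le_rfl
    have hqd : (q : ℝ) * q.den = q.num := by exact_mod_cast Rat.mul_den_eq_num q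
    have h1 : (q : ℝ) * (Nat.factorial q.den : ℝ) = q.num * m := by
      rw [hm]; push_cast; rw [← mul_assoc, hqd]
    refine ⟨q.den, ?_⟩
    rcases lt_or_gt_of_ne hω with h | h
    · refine ⟨-(q.num * m), ?_⟩
      rw [hL, abs_of_neg h]
      push_cast
      rw [← h1]
      field_simp
    · refine ⟨q.num * m, ?_⟩
      rw [hL, abs_of_pos h]
      push_cast
      rw [← h1]
      field_simp
  set E : ℕ → ℝ := fun j => Real.exp (L (j + 1) ^ ((2 * k : ℝ) + ε)) with hE
  have hE0 : ∀ j, 0 < E j := fun j => Real.exp_pos _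
  set b : ℕ → ℝ := fun j => (1 + L (j + 1)) * latticeConst * (B / E j) with hb
  have hK0 : 0 ≤ latticeConst := Real.sqrt_nonneg _
  have hb0 : ∀ j, 0 ≤ b j := fun j => by
    have := hL0 (j + 1); have := hE0 j; positivity
  have hbs : Summable b := by
    have hs : Summable (fun j : ℕ => latticeConst * B * (4 * |ω|) *
        (1 / (Nat.factorial (j + 1) : ℝ))) := by
      refine Summable.mul_left _ ?_
      have := (summable_nat_add_iff 1).2 (Real.summable_pow_div_factorial 1)
      simpa using this
    have hLt : Tendsto L atTop atTop := by
      have : L = fun j => (Nat.factorial j : ℝ) / |ω| := funext hL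
      rw [this]
      exact (tendsto_natCast_atTop_atTop.comp
        (tendsto_atTop_mono Nat.self_le_factorial tendsto_id)).atTop_div_const hω'
    refine Summable.of_norm_bounded_eventually_nat hs ?_
    filter_upwards [(hLt.comp (tendsto_add_atTop_nat 1)).eventually_ge_atTop 1] with j hj
    have ha : 1 ≤ (2 * k : ℝ) + ε := by
      have : (1:ℝ) ≤ k := by exact_mod_cast hk
      linarith
    have h1 := one_add_div_exp_le (L := L (j + 1)) hj ha
    rw [Real.norm_of_nonneg (hb0 j)]
    calc b j = latticeConst * B * ((1 + L (j + 1)) / E j) := by simp only [hb]; ring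
      _ ≤ latticeConst * B * (4 * (L (j + 1))⁻¹) :=
          mul_le_mul_of_nonneg_left h1 (by positivity)
      _ = _ := by rw [hL, inv_div]; ring
  -- frequencies entering when passing from the lattice of `L j` to that of `L (j + 1)`
  have hnew : ∀ j ≥ J, ∀ F : Finset ℝ, (∀ w ∈ F, ∃ n : ℤ, w * L (j + 1) = n) →
      (∀ w ∈ F, ¬ ∃ n : ℤ, w * L j = n) → ∑ w ∈ F, ‖Fhat w‖ ≤ b j := by
    intro j hj F h1 h2
    have hS : S12 (fun x => fj j x - f x) (fun x => fj' j x - f' x) ≤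
        ENNReal.ofReal (B / E j) := by
      rw [ENNReal.ofReal_div_of_pos (hE0 j),
        ENNReal.le_div_iff_mul_le (Or.inl (by simpa using hE0 j)) (Or.inl ENNReal.ofReal_ne_top),
        mul_comm]
      exact hrate j hj
    have := sum_norm_coeff_le ((hwdj j).sub hwd) (M := M + M)
      (fun x => (norm_sub_le _ _).trans (add_le_add (hfjM j x) (hM x)))
      (div_pos hB (hE0 j)).le hS (hL0 (j + 1)) h1 (c := fun w => -Fhat w)
      (fun w hw => hasFourierCoeff_avg_sub hf.1 (hwdj j).continuous hM (hpt j) (hFhat w) (h2 w hw))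
    simpa only [norm_neg] using this
  set b0 : ℝ := (1 + L J) * latticeConst * (S12 f f').toReal with hb0'
  -- split a finite set of frequencies along the chain of lattices `(L J)⁻¹ℤ ⊆ (L (J+1))⁻¹ℤ ⊆ …`
  have hind : ∀ m : ℕ, ∀ F : Finset ℝ, (∀ w ∈ F, ∃ n : ℤ, w * L (J + m) = n) →
      ∑ w ∈ F, ‖Fhat w‖ ≤ b0 + ∑ i ∈ Finset.range m, b (J + i) := by
    intro m
    induction m with
    | zero =>
      intro F hF
      simpa using sum_norm_coeff_le hwd hM ENNReal.toReal_nonneg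
        (ENNReal.ofReal_toReal hfin).ge (hL0 J) hF (fun w _ => hFhat w)
    | succ m ih =>
      intro F hF
      classical
      rw [← Finset.sum_filter_add_sum_filter_not F (fun w => ∃ n : ℤ, w * L (J + m) = n),
        Finset.sum_range_succ, ← add_assoc]
      refine add_le_add (ih _ fun w hw => (Finset.mem_filter.1 hw).2)
        (hnew (J + m) (by omega) _ (fun w hw => hF w (Finset.mem_filter.1 hw).1)
          fun w hw => (Finset.mem_filter.1 hw).2)
  refine summable_of_sum_le (c := b0 + ∑' i, b (J + i)) (fun _ => norm_nonneg _) fun F => ?_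
  classical
  have hF : ∑ w ∈ F, ‖Fhat w‖ = ∑ w ∈ F.filter (fun w => Fhat w ≠ 0), ‖Fhat w‖ := by
    refine (Finset.sum_filter_of_ne fun w _ hw => ?_).symm
    exact norm_ne_zero_iff.1 hw
  have hch : ∀ w : ℝ, ∃ j, Fhat w ≠ 0 → ∃ n : ℤ, w * L j = n := by
    intro w
    by_cases hw : Fhat w = 0
    · exact ⟨0, fun h => absurd hw h⟩
    · obtain ⟨j, hj⟩ := hex w hw
      exact ⟨j, fun _ => hj⟩
  choose d hd using hch
  have hbJ : Summable (fun i => b (J + i)) := by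
    simpa only [add_comm] using (summable_nat_add_iff J).2 hbs
  rw [hF]
  refine (hind (F.sup d) _ fun w hw => ?_).trans
    (add_le_add le_rfl (hbJ.sum_le_tsum _ fun i _ => hb0 _))
  obtain ⟨hw1, hw2⟩ := Finset.mem_filter.1 hw
  exact hmono (d w) _ ((Finset.le_sup hw1).trans (Nat.le_add_left _ _)) w (hd w hw2)
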